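/- arXiv:1707.07412 — 4 statements merged into one kernel-verified Lean document; each statement's English description precedes it below -/
import Mathlib

section
/- Let a, b be real numbers with a ≥ b ≥ 0. Then the function p ↦ ln(1 + a·p) − ln(1 + b·p) is concave on the interval [0, ∞). -/
/-!
On `[0, ∞)` the derivative of the function is `(a - b) / ((1 + a p) (1 + b p))`. Its numerator is
nonnegative and its denominator is positive and nondecreasing in `p`, so the derivative is
antitone, which gives concavity (`AntitoneOn.concaveOn_of_deriv`).
-/

/-- The derivative, with the two terms `a / (1 + a p)` and `b / (1 + b p)` merged into a single
fraction whose monotonicity is visible. -/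
lemma hasDerivAt_log_sub_log {a b p : ℝ} (ha : 0 ≤ a) (hb : 0 ≤ b) (hp : 0 ≤ p) :
    HasDerivAt (fun p : ℝ => Real.log (1 + a * p) - Real.log (1 + b * p))
      ((a - b) / ((1 + a * p) * (1 + b * p))) p := by
  have hpa : 0 < 1 + a * p := by positivity
  have hpb : 0 < 1 + b * p := by positivity
  have key (c : ℝ) (hc : 0 < 1 + c * p) :
      HasDerivAt (fun p : ℝ => Real.log (1 + c * p)) (c / (1 + c * p)) p := by
    have h : HasDerivAt (fun p : ℝ => 1 + c * p) c p := by
      simpa using ((hasDerivAt_id p).const_mul c).const_add 1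
    exact h.log hc.ne'
  have heq : (a - b) / ((1 + a * p) * (1 + b * p)) = a / (1 + a * p) - b / (1 + b * p) := by
    rw [div_sub_div _ _ hpa.ne' hpb.ne']
    ring
  rw [heq]
  exact (key a hpa).sub (key b hpb)

/-- For `a ≥ b ≥ 0`, the function `p ↦ ln(1 + a·p) − ln(1 + b·p)`
is concave on `[0, ∞)`. -/
theorem stmt_2 (a b : ℝ) (hb : 0 ≤ b) (hab : b ≤ a) :
    ConcaveOn ℝ (Set.Ici 0)
      (fun p : ℝ => Real.log (1 + a * p) - Real.log (1 + b * p)) := by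
  have ha : 0 ≤ a := hb.trans hab
  have hd (p : ℝ) (hp : 0 ≤ p) := hasDerivAt_log_sub_log ha hb hp
  refine AntitoneOn.concaveOn_of_deriv (convex_Ici 0)
    (fun p hp => (hd p hp).continuousAt.continuousWithinAt)
    (fun p hp => (hd p (interior_subset hp)).differentiableAt.differentiableWithinAt) ?_
  intro x hx y hy hxy
  have hx0 : 0 ≤ x := interior_subset hx
  have hy0 : 0 ≤ y := interior_subset hy
  rw [(hd x hx0).deriv, (hd y hy0).deriv]
  have hnum : 0 ≤ a - b := sub_nonneg.mpr hab
  gcongr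
end

section
/- Let a, b, λ be real numbers with a > b > 0 and 0 < λ < a − b, and define p* = −1/(2b) − 1/(2a) + √( (1/(2b) − 1/(2a))² + (1/λ)·(1/b − 1/a) ). Then p* > 0 and p* satisfies the stationarity equation a/(1 + a·p*) − b/(1 + b·p*) = λ. -/
/-!
The stationarity equation, cleared of denominators, is the quadratic
`lam * ((1 + a * p) * (1 + b * p)) = a - b`. Completing the square turns it into
`(p + (1/(2b) + 1/(2a)))² = D`, with `D` the radicand, so `pstar` is its larger root. It is positive
because `D - (1/(2b) + 1/(2a))² = ((a - b)/lam - 1)/(a * b) > 0`.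
-/

/-- For `a > b > 0` and `0 < λ < a − b`, the closed-form point
`p* = −1/(2b) − 1/(2a) + √((1/(2b) − 1/(2a))² + (1/λ)·(1/b − 1/a))` is positive and
satisfies the stationarity equation `a/(1 + a·p*) − b/(1 + b·p*) = λ`. -/
theorem stmt_3 (a b lam : ℝ) (hb : 0 < b) (hab : b < a) (hlam : 0 < lam)
    (hlam' : lam < a - b)
    (pstar : ℝ)
    (hp : pstar = -1 / (2 * b) - 1 / (2 * a) +
      Real.sqrt ((1 / (2 * b) - 1 / (2 * a)) ^ 2 + (1 / lam) * (1 / b - 1 / a))) :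
    0 < pstar ∧ a / (1 + a * pstar) - b / (1 + b * pstar) = lam := by
  have ha : 0 < a := hb.trans hab
  set D := (1 / (2 * b) - 1 / (2 * a)) ^ 2 + (1 / lam) * (1 / b - 1 / a) with hD
  have hDs : D = (1 / (2 * b) + 1 / (2 * a)) ^ 2 + ((a - b) / lam - 1) / (a * b) := by
    rw [hD]
    field_simp
    ring
  have hgap : 0 < ((a - b) / lam - 1) / (a * b) :=
    div_pos (sub_pos.2 ((one_lt_div hlam).2 hlam')) (mul_pos ha hb)
  have hroot : Real.sqrt D = pstar + (1 / (2 * b) + 1 / (2 * a)) := by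
    rw [hp]
    ring
  have hpos : 0 < pstar := by
    have h : 1 / (2 * b) + 1 / (2 * a) < Real.sqrt D :=
      Real.lt_sqrt_of_sq_lt (by linarith)
    linarith
  have hsq : (pstar + (1 / (2 * b) + 1 / (2 * a))) ^ 2 = D := by
    rw [← hroot]
    exact Real.sq_sqrt (by rw [hDs]; positivity)
  have hquad : lam * ((1 + a * pstar) * (1 + b * pstar)) = a - b := by
    have h : lam * ((1 + a * pstar) * (1 + b * pstar)) - (a - b) =
        lam * (a * b) * ((pstar + (1 / (2 * b) + 1 / (2 * a))) ^ 2 -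
          ((1 / (2 * b) + 1 / (2 * a)) ^ 2 + ((a - b) / lam - 1) / (a * b))) := by
      field_simp
      ring
    rw [hsq, ← hDs, sub_self, mul_zero] at h
    exact sub_eq_zero.1 h
  have h1 : 0 < 1 + a * pstar := by positivity
  have h2 : 0 < 1 + b * pstar := by positivity
  refine ⟨hpos, ?_⟩
  rw [div_sub_div _ _ h1.ne' h2.ne', div_eq_iff (mul_pos h1 h2).ne', hquad]
  ring
end

section
/- Let a, b, λ, P be real numbers with a > b > 0, λ > 0 and P > 0, and define f(p) = ln(1 + a·p) − ln(1 + b·p) − λ·p and p* = −1/(2b) − 1/(2a) + √( (1/(2b) − 1/(2a))² + (1/λ)·(1/b − 1/a) ). Then the point p̂ = min( max(p*, 0), P ) maximizes f over the interval [0, P]: for every p ∈ [0, P], f(p) ≤ f(p̂). -/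
/-!
On `[0, ∞)` the function `f` lies below its tangent lines: `log x ≤ x - 1` gives
`f p - f q ≤ f'(q) (p - q)` (`sub_le_tangent`), where
`f'(q) = ((a - b) - λ (1 + a q) (1 + b q)) / ((1 + a q) (1 + b q))`.
The numerator factors as `λ a b (p* - q) (q + c + S)` with `c = 1/(2b) + 1/(2a)` and `S` the square
root in `p* = S - c`, so for `q ≥ 0` the derivative `f'(q)` has the sign of `p* - q`. Since `p̂` is
the projection of `p*` onto `[0, P]`, `(p* - p̂) (p - p̂) ≤ 0` for all `p ∈ [0, P]`, whence
`f p ≤ f p̂`.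
-/

/-- The tangent-line bound for `p ↦ log (1 + a p) - log (1 + b p)` on `[0, ∞)`. -/
lemma sub_le_tangent {a b p q : ℝ} (hb : 0 < b) (hab : b < a) (hp : 0 ≤ p) (hq : 0 ≤ q) :
    (Real.log (1 + a * p) - Real.log (1 + b * p)) - (Real.log (1 + a * q) - Real.log (1 + b * q))
      ≤ (a - b) / ((1 + a * q) * (1 + b * q)) * (p - q) := by
  have ha : 0 < a := hb.trans hab
  have h1 : 0 < 1 + a * p := by positivity
  have h2 : 0 < 1 + b * p := by positivity
  have h3 : 0 < 1 + a * q := by positivity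
  have h4 : 0 < 1 + b * q := by positivity
  have hlog := Real.log_le_sub_one_of_pos
    (show 0 < ((1 + a * p) * (1 + b * q)) / ((1 + b * p) * (1 + a * q)) by positivity)
  rw [Real.log_div (by positivity) (by positivity), Real.log_mul h1.ne' h4.ne',
    Real.log_mul h2.ne' h3.ne'] at hlog
  -- Replacing `1 + b p` by `1 + b q` in the denominator costs a nonnegative multiple of `(p - q)²`.
  have key : (a - b) / ((1 + a * q) * (1 + b * q)) * (p - q)
      - (((1 + a * p) * (1 + b * q)) / ((1 + b * p) * (1 + a * q)) - 1)
      = (a - b) * b * (p - q) ^ 2 / ((1 + a * q) * (1 + b * q) * (1 + b * p)) := by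
    field_simp
    ring
  have hnn : 0 ≤ (a - b) * b * (p - q) ^ 2 / ((1 + a * q) * (1 + b * q) * (1 + b * p)) := by
    have : 0 < a - b := sub_pos.2 hab
    positivity
  linarith

/-- For `a > b > 0`, `λ > 0`, `P > 0`, with
`f(p) = ln(1 + a·p) − ln(1 + b·p) − λ·p` and
`p* = −1/(2b) − 1/(2a) + √((1/(2b) − 1/(2a))² + (1/λ)·(1/b − 1/a))`,
the point `p̂ = min(max(p*, 0), P)` maximizes `f` over `[0, P]`. -/
theorem stmt_7 (a b lam P : ℝ) (hb : 0 < b) (hab : b < a) (hlam : 0 < lam)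
    (hP : 0 < P)
    (f : ℝ → ℝ)
    (hf : ∀ p, f p = Real.log (1 + a * p) - Real.log (1 + b * p) - lam * p)
    (pstar phat : ℝ)
    (hps : pstar = -1 / (2 * b) - 1 / (2 * a) +
      Real.sqrt ((1 / (2 * b) - 1 / (2 * a)) ^ 2 + (1 / lam) * (1 / b - 1 / a)))
    (hph : phat = min (max pstar 0) P) :
    ∀ p ∈ Set.Icc (0:ℝ) P, f p ≤ f phat := by
  rintro p ⟨hp0, hpP⟩
  have ha : 0 < a := hb.trans hab
  have hq0 : 0 ≤ phat := by
    rw [hph]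
    exact le_min (le_max_right _ _) hP.le
  have hproj : (pstar - phat) * (p - phat) ≤ 0 := by
    rcases le_total pstar 0 with h | h
    · have hq : phat = 0 := by rw [hph, max_eq_right h, min_eq_left hP.le]
      rw [hq]
      nlinarith
    · rcases le_total pstar P with h' | h'
      · have hq : phat = pstar := by rw [hph, max_eq_left h, min_eq_left h']
        simp [hq]
      · have hq : phat = P := by rw [hph, max_eq_left h, min_eq_right h']
        rw [hq]
        exact mul_nonpos_of_nonneg_of_nonpos (sub_nonneg.2 h') (sub_nonpos.2 hpP)
  have hinv : 0 < 1 / b - 1 / a := sub_pos.2 (one_div_lt_one_div_of_lt hb hab)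
  have hsq := Real.sq_sqrt
    (show 0 ≤ (1 / (2 * b) - 1 / (2 * a)) ^ 2 + (1 / lam) * (1 / b - 1 / a) by positivity)
  have hS0 := Real.sqrt_nonneg ((1 / (2 * b) - 1 / (2 * a)) ^ 2 + (1 / lam) * (1 / b - 1 / a))
  set S := Real.sqrt ((1 / (2 * b) - 1 / (2 * a)) ^ 2 + (1 / lam) * (1 / b - 1 / a))
  have hfac : (a - b) - lam * ((1 + a * phat) * (1 + b * phat))
      = lam * a * b * (pstar - phat) * (phat + (1 / (2 * b) + 1 / (2 * a)) + S) := by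
    have e : (pstar - phat) * (phat + (1 / (2 * b) + 1 / (2 * a)) + S)
        = S ^ 2 - (phat + (1 / (2 * b) + 1 / (2 * a))) ^ 2 := by
      rw [hps]
      ring
    rw [mul_assoc (lam * a * b), e, hsq]
    field_simp
    ring
  have hD : 0 < (1 + a * phat) * (1 + b * phat) := by positivity
  have hslope : ((a - b) / ((1 + a * phat) * (1 + b * phat)) - lam) * (p - phat) ≤ 0 := by
    have e : ((a - b) / ((1 + a * phat) * (1 + b * phat)) - lam) * (p - phat)
        = lam * a * b * (phat + (1 / (2 * b) + 1 / (2 * a)) + S)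
          / ((1 + a * phat) * (1 + b * phat)) * ((pstar - phat) * (p - phat)) := by
      rw [div_sub' hD.ne', mul_comm _ lam, hfac]
      ring
    rw [e]
    exact mul_nonpos_of_nonneg_of_nonpos (by positivity) hproj
  have htan := sub_le_tangent hb hab hp0 hq0
  rw [hf, hf]
  linarith
end

section
/- Let h_D, h_E, g_D, g_E, σ_D, σ_E be positive real numbers with g_E²·σ_D² > g_D²·σ_E² (i.e., |g_E|²/σ_E² > |g_D|²/σ_D²), and let p_J > 0. Then there exists P₀ > 0 such that for every information power p_IT ≥ P₀, ln(1 + p_IT·h_D²/(p_J·g_D² + σ_D²)) − ln(1 + p_IT·h_E²/(p_J·g_E² + σ_E²)) > ln(1 + p_IT·h_D²/σ_D²) − ln(1 + p_IT·h_E²/σ_E²); that is, jamming with power p_J strictly increases the per-subcarrier secrecy rate. -/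
/-!
With `a, b` the signal-to-noise gains at destination and eavesdropper without jamming, and `c, d`
those with jamming, the claim exponentiates to `(1 + p a) (1 + p d) < (1 + p c) (1 + p b)`, where
`p` is the information power. For large `p` the quadratic term decides, and `a d < c b` is exactly
the hypothesis on the jammer's channels. The bound `p ≥ (a + d) / (c b - a d)` is large enough,
since then `p² (c b - a d)` already absorbs the linear term `p (a + d)` on the left.
-/

theorem log_diff_lt_of_large {a b c d p : ℝ} (ha : 0 < a) (hb : 0 < b) (hc : 0 < c) (hd : 0 < d)
    (hlt : a * d < c * b) (hp : (a + d) / (c * b - a * d) ≤ p) :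
    Real.log (1 + p * a) - Real.log (1 + p * b) <
      Real.log (1 + p * c) - Real.log (1 + p * d) := by
  have hgap : 0 < c * b - a * d := sub_pos.mpr hlt
  have hp0 : 0 < p := lt_of_lt_of_le (by positivity) hp
  rw [div_le_iff₀ hgap] at hp
  have hprod : (1 + p * a) * (1 + p * d) < (1 + p * c) * (1 + p * b) := by
    nlinarith [mul_le_mul_of_nonneg_left hp hp0.le, mul_pos hp0 hb, mul_pos hp0 hc]
  have hlog := Real.log_lt_log (by positivity) hprod
  rw [Real.log_mul (by positivity) (by positivity),
    Real.log_mul (by positivity) (by positivity)] at hlog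
  linarith

/-- (Lemma 1, precise version.) If `g_E²·σ_D² > g_D²·σ_E²` and
`p_J > 0`, then for all sufficiently large information power `p_IT` jamming with
power `p_J` strictly increases the per-subcarrier secrecy rate. -/
theorem stmt_13 (hD hE gD gE σD σE pJ : ℝ)
    (hhD : 0 < hD) (hhE : 0 < hE) (hgD : 0 < gD) (hgE : 0 < gE)
    (hσD : 0 < σD) (hσE : 0 < σE)
    (h : gD ^ 2 * σE ^ 2 < gE ^ 2 * σD ^ 2) (hpJ : 0 < pJ) :
    ∃ P₀ : ℝ, 0 < P₀ ∧ ∀ pIT : ℝ, P₀ ≤ pIT →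
      Real.log (1 + pIT * hD ^ 2 / σD ^ 2) -
          Real.log (1 + pIT * hE ^ 2 / σE ^ 2) <
        Real.log (1 + pIT * hD ^ 2 / (pJ * gD ^ 2 + σD ^ 2)) -
          Real.log (1 + pIT * hE ^ 2 / (pJ * gE ^ 2 + σE ^ 2)) := by
  have hlt : hD ^ 2 / σD ^ 2 * (hE ^ 2 / (pJ * gE ^ 2 + σE ^ 2)) <
      hD ^ 2 / (pJ * gD ^ 2 + σD ^ 2) * (hE ^ 2 / σE ^ 2) := by
    rw [div_mul_div_comm, div_mul_div_comm]
    apply div_lt_div_of_pos_left (by positivity) (by positivity)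
    nlinarith [mul_lt_mul_of_pos_left h hpJ]
  refine ⟨_, div_pos (a := hD ^ 2 / σD ^ 2 + hE ^ 2 / (pJ * gE ^ 2 + σE ^ 2)) (by positivity)
    (sub_pos.mpr hlt), fun p hp => ?_⟩
  simp only [mul_div_assoc]
  exact log_diff_lt_of_large (by positivity) (by positivity) (by positivity) (by positivity) hlt hp
end
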